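/- Let ρ0, ρ1, ρ2, ρ3 be nonzero complex numbers such that ρ0, ρ1, −ρ2, −ρ3 all lie in the semiclosed upper half plane, Im(ρ_d/ρ_{d+1}) > 0 for d = 0, 1, 2, and no two of ρ0, ρ1, ρ2, ρ3 are collinear (i.e. ρ_i/ρ_j is not real for all i ≠ j). Then the condition V3 — namely Arg ρ0 > Arg(−ρ3), Arg ρ1 > Arg(−ρ3), and Arg(−ρ2) > Arg(−ρ3) — holds if and only if either the σ3 chain Arg(−ρ2) > Arg ρ0 > Arg ρ1 > Arg(−ρ3) holds or the σ5 chain Arg ρ0 > Arg(−ρ2) > Arg ρ1 > Arg(−ρ3) holds. -/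

import Mathlib

open Complex Real

/-!
Since `Im (z / w) = (‖z‖ / ‖w‖) * sin (Arg z - Arg w)` (`im_div_eq`), for `z`, `w` in the semiclosed
upper half plane the sign of `Im (z / w)` compares the phases (`arg_lt_of_im_div_pos`). Write `a0`,
`a1`, `a2`, `a3` for the phases of `ρ0`, `ρ1`, `-ρ2`, `-ρ3`. The three standard inequalities become
`a0 > a1`, `a2 > a1` (the sign flips because only `ρ2` is negated) and `a2 > a3`, while
non-collinearity of `ρ0` and `ρ2` gives `a0 ≠ a2`. So V3 amounts to `a1 > a3`, and the two chains
are the two possible orders of `a0` and `a2`.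
-/

lemma im_div_eq (z w : ℂ) : (z / w).im = ‖z‖ / ‖w‖ * Real.sin (arg z - arg w) := by
  have h : z / w = ((‖z‖ / ‖w‖ : ℝ) : ℂ) * Complex.exp ((arg z - arg w : ℝ) * I) := by
    conv_lhs => rw [← norm_mul_exp_arg_mul_I z, ← norm_mul_exp_arg_mul_I w]
    push_cast
    rw [sub_mul, Complex.exp_sub, mul_div_mul_comm]
  rw [h, Complex.im_ofReal_mul, Complex.exp_ofReal_mul_I_im]

lemma arg_lt_of_im_div_pos {z w : ℂ} (hz : 0 < arg z) (hw : arg w ≤ π)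
    (h : 0 < (z / w).im) : arg w < arg z := by
  by_contra! hle
  rw [im_div_eq] at h
  have hs : Real.sin (arg z - arg w) ≤ 0 :=
    Real.sin_nonpos_of_nonpos_of_neg_pi_le (by linarith) (by linarith)
  have := mul_nonpos_of_nonneg_of_nonpos (by positivity : 0 ≤ ‖z‖ / ‖w‖) hs
  linarith

/-- For a standard configuration of stability vectors satisfying condition V1,
condition V3 holds iff either the σ3 chain or the σ5 chain of phases holds. -/
theorem stmt_7 (ρ0 ρ1 ρ2 ρ3 : ℂ)
    (hn0 : ρ0 ≠ 0) (hn1 : ρ1 ≠ 0) (hn2 : ρ2 ≠ 0) (hn3 : ρ3 ≠ 0)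
    (hu0 : 0 < arg ρ0 ∧ arg ρ0 ≤ π)
    (hu1 : 0 < arg ρ1 ∧ arg ρ1 ≤ π)
    (hu2 : 0 < arg (-ρ2) ∧ arg (-ρ2) ≤ π)
    (hu3 : 0 < arg (-ρ3) ∧ arg (-ρ3) ≤ π)
    (hq0 : 0 < (ρ0 / ρ1).im) (hq1 : 0 < (ρ1 / ρ2).im) (hq2 : 0 < (ρ2 / ρ3).im)
    (hV1 : ∀ i j : Fin 4, i ≠ j →
      (![ρ0, ρ1, ρ2, ρ3] i / ![ρ0, ρ1, ρ2, ρ3] j).im ≠ 0) :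
    (arg ρ0 > arg (-ρ3) ∧ arg ρ1 > arg (-ρ3) ∧ arg (-ρ2) > arg (-ρ3)) ↔
    ((arg (-ρ2) > arg ρ0 ∧ arg ρ0 > arg ρ1 ∧ arg ρ1 > arg (-ρ3)) ∨
     (arg ρ0 > arg (-ρ2) ∧ arg (-ρ2) > arg ρ1 ∧ arg ρ1 > arg (-ρ3))) := by
  have h01 : arg ρ1 < arg ρ0 := arg_lt_of_im_div_pos hu0.1 hu1.2 hq0
  have h12 : arg ρ1 < arg (-ρ2) := by
    refine arg_lt_of_im_div_pos hu2.1 hu1.2 ?_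
    -- Inverting a quotient flips the sign of its imaginary part, and so does negating `ρ2`.
    rw [← inv_div, Complex.inv_im, div_neg, Complex.neg_im, neg_neg]
    refine div_pos hq1 (Complex.normSq_pos.2 ?_)
    exact neg_ne_zero.2 (div_ne_zero hn1 hn2)
  have h23 : arg (-ρ3) < arg (-ρ2) :=
    arg_lt_of_im_div_pos hu2.1 hu3.2 (by rwa [neg_div_neg_eq])
  have h02 : arg ρ0 ≠ arg (-ρ2) := by
    intro h
    apply hV1 0 2 (by decide)
    have h' := im_div_eq ρ0 (-ρ2)
    rw [h, sub_self, Real.sin_zero, mul_zero, div_neg, Complex.neg_im, neg_eq_zero] at h'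
    exact h'
  constructor
  · rintro ⟨-, h13, -⟩
    rcases lt_or_gt_of_ne h02 with h | h
    · exact Or.inl ⟨h, h01, h13⟩
    · exact Or.inr ⟨h, h12, h13⟩
  · rintro (⟨-, -, h13⟩ | ⟨-, -, h13⟩) <;> exact ⟨h13.trans h01, h13, h23⟩
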